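/- Let φ : ℝ^N → ℝ be a continuous function with compact support. Then ∫_{ℝ^N} |x|^{−2s} · ( ∫_{ℝ^N} H(x,y)·|φ(y)| dy )² dx < ∞. -/

import Mathlib

/-!
Write `a` for `N - 2s`. The kernel factors as
`(1 + |x-y|^γ |x|^{-γ}) (|x-y|^{-a} + |y|^{-γ} |x-y|^{-(a-γ)})`.
If `x` and `y` stay bounded, the first factor is `O(|x|^{-γ})` and the second is
`O(|x-y|^{-a} + |y|^{-a})`, which is integrable in `y` uniformly in `x`; if `|y| ≤ |x| / 2`, then
`|x-y|` is comparable to `|x|` and the kernel is `O(|y|^{-γ} |x|^{-(a-γ)})`. Hence the potential of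
a bounded density with bounded support is `O(|x|^{-γ})` near the origin and `O(|x|^{-(a-γ)})` at
infinity. Since `2γ < a`, the exponents of the weighted squares satisfy
`2s + 2γ < N < 2s + 2(a-γ)`, so both are integrable in their respective regions.
-/

open MeasureTheory Real Set

noncomputable def Hker (N : ℕ) (s γ : ℝ) (x y : EuclideanSpace ℝ (Fin N)) : ℝ :=
  ‖x - y‖ ^ (-((N : ℝ) - 2*s)) +
    (‖x‖ ^ (-γ) + ‖y‖ ^ (-γ)) * ‖x - y‖ ^ (-((N : ℝ) - 2*s - γ)) +
    ‖x‖ ^ (-γ) * ‖y‖ ^ (-γ) * ‖x - y‖ ^ (-((N : ℝ) - 2*s - 2*γ))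

open Metric Module
open scoped ENNReal

section Kernel

variable {E : Type*} [NormedAddCommGroup E] {a γ : ℝ} {x y : E}

/-- The two-sided model of the Green function in a normed space, with the homogeneity `a` of its
leading term as a free parameter; `Hker N s γ` is the case `a = N - 2s`. On the singular set, where
`x = 0`, `y = 0` or `x = y`, real powers of `0` take conventional values. -/
noncomputable def comparisonKernel (a γ : ℝ) (x y : E) : ℝ :=
  ‖x - y‖ ^ (-a) + (‖x‖ ^ (-γ) + ‖y‖ ^ (-γ)) * ‖x - y‖ ^ (-(a - γ)) +
    ‖x‖ ^ (-γ) * ‖y‖ ^ (-γ) * ‖x - y‖ ^ (-(a - 2 * γ))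

lemma comparisonKernel_nonneg (a γ : ℝ) (x y : E) : 0 ≤ comparisonKernel a γ x y := by
  unfold comparisonKernel; positivity

lemma comparisonKernel_eq_mul (a γ : ℝ) (hxy : x ≠ y) :
    comparisonKernel a γ x y = (1 + ‖x - y‖ ^ γ * ‖x‖ ^ (-γ)) *
      (‖x - y‖ ^ (-a) + ‖y‖ ^ (-γ) * ‖x - y‖ ^ (-(a - γ))) := by
  have ht : 0 < ‖x - y‖ := norm_sub_pos_iff.2 hxy
  have h₁ : ‖x - y‖ ^ (-(a - γ)) = ‖x - y‖ ^ γ * ‖x - y‖ ^ (-a) := by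
    rw [← rpow_add ht]; ring_nf
  have h₂ : ‖x - y‖ ^ (-(a - 2 * γ)) = ‖x - y‖ ^ γ * (‖x - y‖ ^ γ * ‖x - y‖ ^ (-a)) := by
    rw [← rpow_add ht, ← rpow_add ht]; ring_nf
  rw [comparisonKernel, h₁, h₂]
  ring

lemma rpow_neg_mul_rpow_neg_le_add {v t b c : ℝ} (hv : 0 < v) (ht : 0 < t) (hb : 0 ≤ b)
    (hc : 0 ≤ c) : v ^ (-b) * t ^ (-c) ≤ v ^ (-(b + c)) + t ^ (-(b + c)) := by
  have hm : 0 < min v t := lt_min hv ht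
  calc v ^ (-b) * t ^ (-c) ≤ min v t ^ (-b) * min v t ^ (-c) := by
        gcongr ?_ * ?_
        · exact rpow_le_rpow_of_nonpos hm (min_le_left v t) (neg_nonpos.2 hb)
        · exact rpow_le_rpow_of_nonpos hm (min_le_right v t) (neg_nonpos.2 hc)
    _ = min v t ^ (-(b + c)) := by rw [← rpow_add hm, neg_add]
    _ ≤ v ^ (-(b + c)) + t ^ (-(b + c)) := by
        rcases min_choice v t with h | h <;> rw [h]
        · exact le_add_of_nonneg_right (by positivity)
        · exact le_add_of_nonneg_left (by positivity)

lemma comparisonKernel_le_of_norm_le {C : ℝ} (hγ : 0 ≤ γ) (hγa : γ ≤ a) (hx : x ≠ 0) (hy : y ≠ 0)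
    (hxy : x ≠ y) (hxC : ‖x‖ ≤ C) (hxyC : ‖x - y‖ ≤ C) :
    comparisonKernel a γ x y ≤ 4 * C ^ γ * ‖x‖ ^ (-γ) * (‖x - y‖ ^ (-a) + ‖y‖ ^ (-a)) := by
  have hu : 0 < ‖x‖ := norm_pos_iff.2 hx
  have hone : 1 ≤ C ^ γ * ‖x‖ ^ (-γ) :=
    calc (1 : ℝ) = ‖x‖ ^ γ * ‖x‖ ^ (-γ) := by rw [← rpow_add hu, add_neg_cancel, rpow_zero]
      _ ≤ C ^ γ * ‖x‖ ^ (-γ) := by gcongr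
  have hfst : 1 + ‖x - y‖ ^ γ * ‖x‖ ^ (-γ) ≤ 2 * (C ^ γ * ‖x‖ ^ (-γ)) := by
    have : ‖x - y‖ ^ γ * ‖x‖ ^ (-γ) ≤ C ^ γ * ‖x‖ ^ (-γ) := by gcongr
    linarith
  have hsnd : ‖x - y‖ ^ (-a) + ‖y‖ ^ (-γ) * ‖x - y‖ ^ (-(a - γ)) ≤
      2 * (‖x - y‖ ^ (-a) + ‖y‖ ^ (-a)) := by
    have hmixed := rpow_neg_mul_rpow_neg_le_add (norm_pos_iff.2 hy) (norm_sub_pos_iff.2 hxy) hγ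
      (sub_nonneg.2 hγa)
    rw [add_sub_cancel] at hmixed
    have : 0 ≤ ‖y‖ ^ (-a) := by positivity
    linarith
  calc comparisonKernel a γ x y
      ≤ 2 * (C ^ γ * ‖x‖ ^ (-γ)) * (2 * (‖x - y‖ ^ (-a) + ‖y‖ ^ (-a))) := by
        rw [comparisonKernel_eq_mul a γ hxy]; gcongr
    _ = 4 * C ^ γ * ‖x‖ ^ (-γ) * (‖x - y‖ ^ (-a) + ‖y‖ ^ (-a)) := by ring

lemma rpow_neg_le_two_rpow_mul {t u b : ℝ} (hu : 0 < u) (hut : u / 2 ≤ t) (hb : 0 ≤ b) :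
    t ^ (-b) ≤ 2 ^ b * u ^ (-b) :=
  calc t ^ (-b) ≤ (u / 2) ^ (-b) := rpow_le_rpow_of_nonpos (half_pos hu) hut (neg_nonpos.2 hb)
    _ = 2 ^ b * u ^ (-b) := by
      rw [div_rpow hu.le zero_le_two, rpow_neg zero_le_two, div_inv_eq_mul, mul_comm]

lemma comparisonKernel_le_of_norm_le_half (hγ : 0 ≤ γ) (hγa : γ ≤ a) (hy : y ≠ 0)
    (hyx : ‖y‖ ≤ ‖x‖ / 2) :
    comparisonKernel a γ x y ≤ 4 * 2 ^ (γ + a) * ‖x‖ ^ (-(a - γ)) * ‖y‖ ^ (-γ) := by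
  have hv : 0 < ‖y‖ := norm_pos_iff.2 hy
  have hu : 0 < ‖x‖ := by linarith
  have hlower : ‖x‖ / 2 ≤ ‖x - y‖ := by linarith [norm_sub_norm_le x y]
  have hupper : ‖x - y‖ ≤ 2 * ‖x‖ := by linarith [norm_sub_le x y]
  have hxy : x ≠ y := norm_sub_pos_iff.1 ((half_pos hu).trans_le hlower)
  have hfst : 1 + ‖x - y‖ ^ γ * ‖x‖ ^ (-γ) ≤ 2 * 2 ^ γ := by
    have hratio : ‖x - y‖ ^ γ * ‖x‖ ^ (-γ) ≤ 2 ^ γ :=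
      calc ‖x - y‖ ^ γ * ‖x‖ ^ (-γ) ≤ (2 * ‖x‖) ^ γ * ‖x‖ ^ (-γ) := by gcongr
        _ = 2 ^ γ := by
          rw [mul_rpow zero_le_two hu.le, mul_assoc, ← rpow_add hu, add_neg_cancel, rpow_zero,
            mul_one]
    linarith [one_le_rpow one_le_two hγ]
  have hpure : ‖x - y‖ ^ (-a) ≤ 2 ^ a * (‖y‖ ^ (-γ) * ‖x‖ ^ (-(a - γ))) :=
    calc ‖x - y‖ ^ (-a) ≤ 2 ^ a * ‖x‖ ^ (-a) :=
          rpow_neg_le_two_rpow_mul hu hlower (hγ.trans hγa)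
      _ = 2 ^ a * (‖x‖ ^ (-γ) * ‖x‖ ^ (-(a - γ))) := by rw [← rpow_add hu]; ring_nf
      _ ≤ 2 ^ a * (‖y‖ ^ (-γ) * ‖x‖ ^ (-(a - γ))) := by
          gcongr 2 ^ a * (?_ * _)
          exact rpow_le_rpow_of_nonpos hv (by linarith) (neg_nonpos.2 hγ)
  have hmixed : ‖y‖ ^ (-γ) * ‖x - y‖ ^ (-(a - γ)) ≤ 2 ^ a * (‖y‖ ^ (-γ) * ‖x‖ ^ (-(a - γ))) :=
    calc ‖y‖ ^ (-γ) * ‖x - y‖ ^ (-(a - γ)) ≤ ‖y‖ ^ (-γ) * (2 ^ (a - γ) * ‖x‖ ^ (-(a - γ))) := by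
          gcongr; exact rpow_neg_le_two_rpow_mul hu hlower (sub_nonneg.2 hγa)
      _ ≤ ‖y‖ ^ (-γ) * (2 ^ a * ‖x‖ ^ (-(a - γ))) := by
          gcongr
          · exact one_le_two
          · linarith
      _ = 2 ^ a * (‖y‖ ^ (-γ) * ‖x‖ ^ (-(a - γ))) := by ring
  calc comparisonKernel a γ x y
      ≤ 2 * 2 ^ γ * (2 ^ a * (‖y‖ ^ (-γ) * ‖x‖ ^ (-(a - γ))) +
          2 ^ a * (‖y‖ ^ (-γ) * ‖x‖ ^ (-(a - γ)))) := by
        rw [comparisonKernel_eq_mul a γ hxy]; gcongr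
    _ = 4 * 2 ^ (γ + a) * ‖x‖ ^ (-(a - γ)) * ‖y‖ ^ (-γ) := by
        rw [rpow_add zero_lt_two]; ring

end Kernel

section Potential

variable {E F : Type*} [NormedAddCommGroup E] [MeasurableSpace E] [NormedAddCommGroup F]

/-- The potential of the density `‖f‖` for `comparisonKernel`. It takes values in `ℝ≥0∞`, so that
its finiteness is a genuine assertion. -/
noncomputable def greenPotential (μ : Measure E) (a γ : ℝ) (f : E → F) (x : E) : ℝ≥0∞ :=
  ∫⁻ y, ENNReal.ofReal (comparisonKernel a γ x y) * ‖f y‖ₑ ∂μ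

lemma greenPotential_le_mul_setLIntegral (μ : Measure E) (a γ : ℝ) {f : E → F} {M R : ℝ}
    (hfM : ∀ y, ‖f y‖ ≤ M) (hfR : Function.support f ⊆ closedBall 0 R) (x : E) :
    greenPotential μ a γ f x ≤ ENNReal.ofReal M *
      ∫⁻ y in closedBall 0 R, ENNReal.ofReal (comparisonKernel a γ x y) ∂μ := by
  have hsupp : Function.support (fun y => ENNReal.ofReal (comparisonKernel a γ x y) * ‖f y‖ₑ) ⊆
      closedBall 0 R :=
    (Function.support_mul_subset_right _ _).trans fun y hy => hfR (enorm_ne_zero.1 hy)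
  rw [greenPotential, ← setLIntegral_eq_of_support_subset hsupp,
    ← lintegral_const_mul' _ _ ENNReal.ofReal_ne_top]
  refine lintegral_mono fun y => ?_
  rw [mul_comm, ← ofReal_norm]
  gcongr
  exact hfM y

lemma ofReal_mul_sq_integral_le_greenPotential (μ : Measure E) (a γ w : ℝ) (φ : E → ℝ) (x : E) :
    ENNReal.ofReal (w * (∫ y, comparisonKernel a γ x y * |φ y| ∂μ) ^ 2) ≤
      ENNReal.ofReal w * greenPotential μ a γ φ x ^ 2 := by
  have hpot : 0 ≤ ∫ y, comparisonKernel a γ x y * |φ y| ∂μ :=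
    integral_nonneg fun y => mul_nonneg (comparisonKernel_nonneg a γ x y) (abs_nonneg _)
  rw [ENNReal.ofReal_mul' (sq_nonneg _), ENNReal.ofReal_pow hpot]
  gcongr
  calc ENNReal.ofReal (∫ y, comparisonKernel a γ x y * |φ y| ∂μ)
      ≤ ‖∫ y, comparisonKernel a γ x y * |φ y| ∂μ‖ₑ := ofReal_le_enorm _
    _ ≤ ∫⁻ y, ‖comparisonKernel a γ x y * |φ y|‖ₑ ∂μ := enorm_integral_le_lintegral_enorm _
    _ = greenPotential μ a γ φ x := by
      simp only [greenPotential, enorm_mul, enorm_abs,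
        enorm_of_nonneg (comparisonKernel_nonneg a γ x _)]

end Potential

lemma setLIntegral_closedBall_comp_sub_le {E : Type*} [SeminormedAddCommGroup E]
    [MeasurableSpace E] [BorelSpace E] (μ : Measure E) [μ.IsAddRightInvariant] {x : E} {R r : ℝ}
    (hr : R + ‖x‖ ≤ r) (g : E → ℝ≥0∞) :
    ∫⁻ y in closedBall 0 R, g (y - x) ∂μ ≤ ∫⁻ y in closedBall 0 r, g y ∂μ := by
  rw [← lintegral_indicator measurableSet_closedBall,
    ← lintegral_indicator measurableSet_closedBall,
    ← lintegral_sub_right_eq_self ((closedBall 0 r).indicator g) x]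
  refine lintegral_mono (indicator_le fun y hy => ?_)
  have hyx : y - x ∈ closedBall (0 : E) r := by
    rw [mem_closedBall_zero_iff] at hy ⊢
    linarith [norm_sub_le y x]
  rw [indicator_of_mem hyx]

section Haar

variable {E : Type*} [NormedAddCommGroup E] [NormedSpace ℝ E] [FiniteDimensional ℝ E]
  [MeasurableSpace E] [BorelSpace E] (μ : Measure E) [μ.IsAddHaarMeasure]

lemma setLIntegral_compl_closedBall_rpow_neg_norm_lt_top {p r : ℝ} (hp : finrank ℝ E < p)
    (hr : 0 < r) : ∫⁻ x in (closedBall 0 r)ᶜ, ENNReal.ofReal (‖x‖ ^ (-p)) ∂μ < ∞ := by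
  have hp₀ : 0 < p := (Nat.cast_nonneg _).trans_lt hp
  have hbracket (x : E) (hx : x ∈ (closedBall 0 r)ᶜ) :
      ENNReal.ofReal (‖x‖ ^ (-p)) ≤
        ENNReal.ofReal ((r⁻¹ + 1) ^ p * (1 + ‖x‖) ^ (-p)) := by
    have hrx : r < ‖x‖ := by simpa using hx
    have hx₀ : 0 < ‖x‖ := hr.trans hrx
    have hle : 1 + ‖x‖ ≤ (r⁻¹ + 1) * ‖x‖ := by
      have : 1 ≤ r⁻¹ * ‖x‖ := by rw [inv_mul_eq_div]; exact (one_le_div hr).2 hrx.le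
      linarith
    gcongr
    calc ‖x‖ ^ (-p) = (r⁻¹ + 1) ^ p * ((r⁻¹ + 1) * ‖x‖) ^ (-p) := by
          rw [mul_rpow (by positivity) hx₀.le, ← mul_assoc, ← rpow_add (by positivity),
            add_neg_cancel, rpow_zero, one_mul]
      _ ≤ (r⁻¹ + 1) ^ p * (1 + ‖x‖) ^ (-p) := by
          gcongr _ * ?_
          exact rpow_le_rpow_of_nonpos (by positivity) hle (neg_nonpos.2 hp₀.le)
  exact (setLIntegral_mono' measurableSet_closedBall.compl hbracket).trans_lt
    ((integrable_one_add_norm hp).const_mul _).integrableOn.setLIntegral_lt_top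

variable [Nontrivial E]

lemma setLIntegral_closedBall_rpow_neg_norm_lt_top {p : ℝ} (hp : p < finrank ℝ E) (r : ℝ) :
    ∫⁻ x in closedBall 0 r, ENNReal.ofReal (‖x‖ ^ (-p)) ∂μ < ∞ := by
  have hloc : LocallyIntegrable (fun x : E => ‖x‖ ^ (-p)) μ := by
    refine locallyIntegrable_of_norm_le_rpow (C := 1) finrank_pos hp (ae_of_all _ fun x => ?_)
      (by fun_prop : Measurable _).aestronglyMeasurable
    rw [one_mul, norm_of_nonneg (by positivity)]
  exact (hloc.integrableOn_isCompact (isCompact_closedBall 0 r)).setLIntegral_lt_top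

variable {F : Type*} [NormedAddCommGroup F] {a γ M R : ℝ} {f : E → F}

lemma exists_greenPotential_le_of_norm_le (hγ : 0 ≤ γ) (hγa : γ ≤ a) (ha : a < finrank ℝ E)
    (hfM : ∀ y, ‖f y‖ ≤ M) (hfR : Function.support f ⊆ closedBall 0 R) (hR : 0 ≤ R) (r : ℝ) :
    ∃ C ≠ ∞, ∀ x ≠ 0, ‖x‖ ≤ r →
      greenPotential μ a γ f x ≤ C * ENNReal.ofReal (‖x‖ ^ (-γ)) := by
  set I : ℝ≥0∞ := ∫⁻ y in closedBall (0 : E) (R + r), ENNReal.ofReal (‖y‖ ^ (-a)) ∂μ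
  have hI : I ≠ ∞ := (setLIntegral_closedBall_rpow_neg_norm_lt_top μ ha _).ne
  refine ⟨ENNReal.ofReal M * (ENNReal.ofReal (4 * (R + r) ^ γ) * (I + I)), by finiteness,
    fun x hx hxr => ?_⟩
  have hRr : 0 ≤ R + r := add_nonneg hR ((norm_nonneg x).trans hxr)
  set c : ℝ := 4 * (R + r) ^ γ * ‖x‖ ^ (-γ) with hc_def
  have hc : 0 ≤ c := by positivity
  have hkernel : ∀ᵐ y ∂μ.restrict (closedBall 0 R), ENNReal.ofReal (comparisonKernel a γ x y) ≤
      ENNReal.ofReal c * (ENNReal.ofReal (‖y - x‖ ^ (-a)) + ENNReal.ofReal (‖y‖ ^ (-a))) := by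
    filter_upwards [ae_restrict_mem measurableSet_closedBall, Measure.ae_ne _ 0, Measure.ae_ne _ x]
      with y hyR hy hyx
    rw [mem_closedBall_zero_iff] at hyR
    rw [← ENNReal.ofReal_add (by positivity) (by positivity), ← ENNReal.ofReal_mul hc,
      norm_sub_rev]
    gcongr
    exact comparisonKernel_le_of_norm_le hγ hγa hx hy hyx.symm (by linarith)
      (by linarith [norm_sub_le x y])
  have hshift : ∫⁻ y in closedBall 0 R, ENNReal.ofReal (‖y - x‖ ^ (-a)) ∂μ ≤ I :=
    setLIntegral_closedBall_comp_sub_le μ (by linarith) fun y => ENNReal.ofReal (‖y‖ ^ (-a))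
  have hcenter : ∫⁻ y in closedBall 0 R, ENNReal.ofReal (‖y‖ ^ (-a)) ∂μ ≤ I :=
    lintegral_mono_set (closedBall_subset_closedBall (by linarith [(norm_nonneg x).trans hxr]))
  calc greenPotential μ a γ f x
      ≤ ENNReal.ofReal M *
          ∫⁻ y in closedBall 0 R, ENNReal.ofReal (comparisonKernel a γ x y) ∂μ :=
        greenPotential_le_mul_setLIntegral μ a γ hfM hfR x
    _ ≤ ENNReal.ofReal M * (ENNReal.ofReal c * (I + I)) := by
        gcongr
        refine (lintegral_mono_ae hkernel).trans ?_
        rw [lintegral_const_mul' _ _ ENNReal.ofReal_ne_top, lintegral_add_left (by fun_prop)]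
        gcongr
    _ = ENNReal.ofReal M * (ENNReal.ofReal (4 * (R + r) ^ γ) * (I + I)) *
          ENNReal.ofReal (‖x‖ ^ (-γ)) := by
        rw [hc_def, ENNReal.ofReal_mul (by positivity)]; ring

lemma exists_greenPotential_le_of_two_mul_le_norm (hγ : 0 ≤ γ) (hγa : γ ≤ a)
    (hγd : γ < finrank ℝ E) (hfM : ∀ y, ‖f y‖ ≤ M)
    (hfR : Function.support f ⊆ closedBall 0 R) :
    ∃ C ≠ ∞, ∀ x, 2 * R ≤ ‖x‖ →
      greenPotential μ a γ f x ≤ C * ENNReal.ofReal (‖x‖ ^ (-(a - γ))) := by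
  set I : ℝ≥0∞ := ∫⁻ y in closedBall (0 : E) R, ENNReal.ofReal (‖y‖ ^ (-γ)) ∂μ
  have hI : I ≠ ∞ := (setLIntegral_closedBall_rpow_neg_norm_lt_top μ hγd _).ne
  refine ⟨ENNReal.ofReal M * (ENNReal.ofReal (4 * 2 ^ (γ + a)) * I), by finiteness, fun x hx => ?_⟩
  set c : ℝ := 4 * 2 ^ (γ + a) * ‖x‖ ^ (-(a - γ)) with hc_def
  have hc : 0 ≤ c := by positivity
  have hkernel : ∀ᵐ y ∂μ.restrict (closedBall 0 R), ENNReal.ofReal (comparisonKernel a γ x y) ≤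
      ENNReal.ofReal c * ENNReal.ofReal (‖y‖ ^ (-γ)) := by
    filter_upwards [ae_restrict_mem measurableSet_closedBall, Measure.ae_ne _ 0] with y hyR hy
    rw [mem_closedBall_zero_iff] at hyR
    rw [← ENNReal.ofReal_mul hc]
    gcongr
    exact comparisonKernel_le_of_norm_le_half hγ hγa hy (by linarith)
  calc greenPotential μ a γ f x
      ≤ ENNReal.ofReal M *
          ∫⁻ y in closedBall 0 R, ENNReal.ofReal (comparisonKernel a γ x y) ∂μ :=
        greenPotential_le_mul_setLIntegral μ a γ hfM hfR x
    _ ≤ ENNReal.ofReal M * (ENNReal.ofReal c * I) := by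
        gcongr
        refine (lintegral_mono_ae hkernel).trans_eq ?_
        rw [lintegral_const_mul' _ _ ENNReal.ofReal_ne_top]
    _ = ENNReal.ofReal M * (ENNReal.ofReal (4 * 2 ^ (γ + a)) * I) *
          ENNReal.ofReal (‖x‖ ^ (-(a - γ))) := by
        rw [hc_def, ENNReal.ofReal_mul (by positivity)]; ring

end Haar

lemma setLIntegral_rpow_neg_norm_mul_sq_lt_top {E : Type*} [NormedAddCommGroup E]
    [MeasurableSpace E] {μ : Measure E} [NullSingletonClass μ] {β b : ℝ} {S : Set E}
    (hS : MeasurableSet S) {u : E → ℝ≥0∞} {C : ℝ≥0∞} (hC : C ≠ ∞)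
    (hu : ∀ x ∈ S, x ≠ 0 → u x ≤ C * ENNReal.ofReal (‖x‖ ^ (-b)))
    (hint : ∫⁻ x in S, ENNReal.ofReal (‖x‖ ^ (-(β + 2 * b))) ∂μ < ∞) :
    ∫⁻ x in S, ENNReal.ofReal (‖x‖ ^ (-β)) * u x ^ 2 ∂μ < ∞ := by
  have hbound : ∀ᵐ x ∂μ.restrict S, ENNReal.ofReal (‖x‖ ^ (-β)) * u x ^ 2 ≤
      C ^ 2 * ENNReal.ofReal (‖x‖ ^ (-(β + 2 * b))) := by
    filter_upwards [ae_restrict_mem hS, Measure.ae_ne _ 0] with x hxS hx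
    have hpow : ‖x‖ ^ (-(β + 2 * b)) = ‖x‖ ^ (-β) * (‖x‖ ^ (-b)) ^ 2 := by
      have hx₀ : 0 < ‖x‖ := norm_pos_iff.2 hx
      rw [pow_two, ← rpow_add hx₀, ← rpow_add hx₀]; ring_nf
    calc ENNReal.ofReal (‖x‖ ^ (-β)) * u x ^ 2
        ≤ ENNReal.ofReal (‖x‖ ^ (-β)) * (C * ENNReal.ofReal (‖x‖ ^ (-b))) ^ 2 := by
          gcongr; exact hu x hxS hx
      _ = C ^ 2 * ENNReal.ofReal (‖x‖ ^ (-(β + 2 * b))) := by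
          rw [hpow, ENNReal.ofReal_mul (by positivity), ENNReal.ofReal_pow (by positivity)]; ring
  refine (lintegral_mono_ae hbound).trans_lt ?_
  rw [lintegral_const_mul' _ _ (by finiteness)]
  finiteness

theorem green_potential_weighted_L2_finite_general {E F : Type*} [NormedAddCommGroup E]
    [NormedSpace ℝ E] [FiniteDimensional ℝ E] [MeasurableSpace E] [BorelSpace E] (μ : Measure E)
    [μ.IsAddHaarMeasure] [NormedAddCommGroup F] {a β γ : ℝ} (hγ : 0 ≤ γ)
    (ha : a < finrank ℝ E) (hzero : β + 2 * γ < finrank ℝ E)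
    (hinfty : finrank ℝ E < β + 2 * (a - γ)) {f : E → F} {M : ℝ} (hfM : ∀ y, ‖f y‖ ≤ M)
    (hf : Bornology.IsBounded (Function.support f)) :
    ∫⁻ x, ENNReal.ofReal (‖x‖ ^ (-β)) * greenPotential μ a γ f x ^ 2 ∂μ < ∞ := by
  have hdim : (0 : ℝ) < finrank ℝ E := by linarith
  have : Nontrivial E := nontrivial_of_finrank_pos (R := ℝ) (by exact_mod_cast hdim)
  obtain ⟨R, hR, hfR⟩ := hf.subset_closedBall_lt 0 0
  obtain ⟨C₀, hC₀, hu₀⟩ := exists_greenPotential_le_of_norm_le μ hγ (by linarith) ha hfM hfR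
    hR.le (2 * R)
  obtain ⟨C₁, hC₁, hu₁⟩ := exists_greenPotential_le_of_two_mul_le_norm μ hγ
    (by linarith : γ ≤ a) (by linarith) hfM hfR
  have hball := setLIntegral_rpow_neg_norm_mul_sq_lt_top measurableSet_closedBall hC₀
    (fun x hxR hx => hu₀ x hx (mem_closedBall_zero_iff.1 hxR))
    (setLIntegral_closedBall_rpow_neg_norm_lt_top μ hzero (2 * R))
  have hcompl := setLIntegral_rpow_neg_norm_mul_sq_lt_top measurableSet_closedBall.compl hC₁
    (fun x hxR _ => hu₁ x (not_le.1 (mt mem_closedBall_zero_iff.2 hxR)).le)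
    (setLIntegral_compl_closedBall_rpow_neg_norm_lt_top μ hinfty (mul_pos two_pos hR))
  rw [← lintegral_add_compl _ measurableSet_closedBall]
  exact ENNReal.add_lt_top.2 ⟨hball, hcompl⟩

theorem green_potential_weighted_L2_finite
    (N : ℕ) (s γ : ℝ) (hs : s ∈ Set.Ioo (0:ℝ) 1)
    (hN : 2 * s < (N : ℝ)) (hγ : γ ∈ Set.Ioo (0:ℝ) (((N : ℝ) - 2*s)/2))
    (φ : EuclideanSpace ℝ (Fin N) → ℝ) (hφ : Continuous φ)
    (hφc : HasCompactSupport φ) :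
    ∫⁻ x : EuclideanSpace ℝ (Fin N),
        ENNReal.ofReal (‖x‖ ^ (-(2*s)) * (∫ y, Hker N s γ x y * |φ y|) ^ 2) < ⊤ := by
  obtain ⟨M, hM⟩ := hφ.bounded_above_of_compact_support hφc
  have hdim : (finrank ℝ (EuclideanSpace ℝ (Fin N)) : ℝ) = N := by
    rw [finrank_euclideanSpace_fin]
  exact (lintegral_mono fun x =>
    ofReal_mul_sq_integral_le_greenPotential volume (N - 2 * s) γ (‖x‖ ^ (-(2 * s))) φ x).trans_lt
    (green_potential_weighted_L2_finite_general volume hγ.1.le (by linarith [hs.1])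
      (by linarith [hγ.2]) (by linarith [hγ.2]) hM
      (hφc.isBounded.subset (subset_tsupport φ)))
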